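/- arXiv:1309.5404 — 2 statements merged into one kernel-verified Lean document; each statement's English description precedes it below -/
import Mathlib

section
/- Let 1 ≤ p₀ < p₁ < ∞ and let 0 < θ₁ < θ₀ < 1 satisfy θ₁ − n/p₁ = θ₀ − n/p₀. Then there is a constant C, depending only on n, p₀, p₁, θ₀, θ₁, such that ‖f‖_{Ḃ^{p₁,p₁}_{θ₁}(ℝ^n)} ≤ C ‖f‖_{Ḃ^{p₀,p₀}_{θ₀}(ℝ^n)} for every locally integrable f : ℝ^n → ℂ. -/
/-!
The proof is a Hedberg-type truncation argument. Write `p = p₀`, `q = p₁`, `θ = θ₀`,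
`V(x, r) = ∫_{B(x, r)} |f x - f z| dz` (`ballOsc`), `Φ(x)` for the inner integral of the `p₀`-seminorm
(`besovDensity`), so that `∫ Φ` is the `p`-th power `N` of that seminorm, and put `F = Φ(x)^{1/p}`
and `M = N^{1/p}`.

* Local bound (`ballOsc_le`): Hölder's inequality gives `V(x, r) / r^n ≲ r^θ F`.
* Doubling bound (`ballOsc_two_mul_le`): averaging the triangle inequality through a point of
  `B(x, r)` gives `V(x, 2r) / (2r)^n ≤ V(x, r) / r^n + C M r^{θ - n/p}`.

Let `ρ` be the scale with `F ρ^{n/p} = M`. Fix `ε` with `max 0 (θ - n/p) < ε < θ₁`; this is possible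
because `θ₁ = θ - n/p + n/q`. Iterating the doubling bound upwards from scale `ρ` (`growth_bound`)
yields `V(x, r) / r^n ≲ F ρ^θ min((r/ρ)^θ, (r/ρ)^ε)` for all `r`. As `ε < θ₁ < θ`, the `q`-th power of
the right-hand side, with `r = 2|x - y|`, is integrable in `y` against `|x - y|^{-n - q θ₁}`
(`kernel_lt_top`), and by scaling its integral is a multiple of
`F^q ρ^{q (θ - θ₁)} = Φ(x) M^{q - p}` (`lintegral_ballOsc_le`). Integrating in `x` gives `M^q`.

Finally `|f x - f y| ≲ (V(x, 2|x - y|) + V(y, 2|x - y|)) / |x - y|^n`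
(`ofReal_norm_sub_le_ballOsc`), and the two terms contribute equally by symmetry. For a merely
locally integrable `f`, a measurable representative has the same seminorms.
-/

open MeasureTheory ENNReal Metric
noncomputable section

/-- The homogeneous Besov seminorm `‖f‖_{Ḃ^{p,p}_θ(ℝ^n)}`, valued in `ℝ≥0∞`:
`(∫_{ℝ^n} ∫_{ℝ^n} |f x − f y|^p / |x−y|^{n+pθ} dx dy)^{1/p}`. -/
def besovNorm (n : ℕ) (p θ : ℝ) (f : EuclideanSpace ℝ (Fin n) → ℂ) : ℝ≥0∞ :=
  (∫⁻ x, ∫⁻ y, ENNReal.ofReal ‖f x - f y‖ ^ p / ENNReal.ofReal (dist x y) ^ ((n : ℝ) + p * θ)) ^ p⁻¹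


/-- The unnormalised oscillation `∫_{B(x, r)} |f x - f z| dz` of `f` about its value at the centre
of a ball. -/
def ballOsc {n : ℕ} (f : EuclideanSpace ℝ (Fin n) → ℂ) (x : EuclideanSpace ℝ (Fin n)) (r : ℝ) :
    ℝ≥0∞ :=
  ∫⁻ z in ball x r, ENNReal.ofReal ‖f x - f z‖

/-- The inner integral `∫ |f x - f y|^p / |x - y|^{n + pθ} dy` of the Besov seminorm; its integral
over `x` is the `p`-th power of the seminorm. -/
def besovDensity {n : ℕ} (p θ : ℝ) (f : EuclideanSpace ℝ (Fin n) → ℂ)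
    (x : EuclideanSpace ℝ (Fin n)) : ℝ≥0∞ :=
  ∫⁻ y, ENNReal.ofReal ‖f x - f y‖ ^ p / ENNReal.ofReal (dist x y) ^ ((n : ℝ) + p * θ)

/-! ### Oscillation over balls -/

section
variable {n : ℕ}

lemma ofReal_norm_sub_le (a b c : ℂ) :
    ENNReal.ofReal ‖a - c‖ ≤ ENNReal.ofReal ‖a - b‖ + ENNReal.ofReal ‖b - c‖ := by
  rw [← ENNReal.ofReal_add (norm_nonneg _) (norm_nonneg _)]
  exact ENNReal.ofReal_le_ofReal (norm_sub_le_norm_sub_add_norm_sub a b c)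

lemma volume_ball_eq (x : EuclideanSpace ℝ (Fin n)) {r : ℝ} (hr : 0 < r) :
    volume (ball x r) = ENNReal.ofReal r ^ (n : ℝ) * volume (ball (0 : EuclideanSpace ℝ (Fin n)) 1) := by
  rw [Measure.addHaar_ball_of_pos _ _ hr, finrank_euclideanSpace_fin, ENNReal.ofReal_pow hr.le,
    ENNReal.rpow_natCast]

/-- Hölder's inequality against the constant function `1`. -/
lemma lintegral_le_rpow_mul {α : Type*} [MeasurableSpace α] {μ : Measure α} {p : ℝ} (hp : 1 ≤ p)
    {g : α → ℝ≥0∞} (hg : Measurable g) :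
    ∫⁻ z, g z ∂μ ≤ (∫⁻ z, g z ^ p ∂μ) ^ p⁻¹ * μ Set.univ ^ (1 - p⁻¹) := by
  have := eLpNorm'_le_eLpNorm'_mul_rpow_measure_univ (μ := μ) (f := g) zero_lt_one hp
    hg.aestronglyMeasurable
  simpa [eLpNorm'] using this

/-- The local bound: by Hölder's inequality the mean oscillation over `B(x, r)` is `≲ r^θ Φ(x)^{1/p}`,
where `Φ = besovDensity p θ f`. -/
lemma ballOsc_le {p θ : ℝ} (hp : 1 ≤ p) (hθ : 0 < θ) {f : EuclideanSpace ℝ (Fin n) → ℂ}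
    (hf : Measurable f) (x : EuclideanSpace ℝ (Fin n)) {r : ℝ} (hr : 0 < r) :
    ballOsc f x r ≤ volume (ball (0 : EuclideanSpace ℝ (Fin n)) 1) ^ (1 - p⁻¹) *
      ENNReal.ofReal r ^ ((n : ℝ) + θ) * besovDensity p θ f x ^ p⁻¹ := by
  have hp0 : 0 < p := by linarith
  have hR0 : ENNReal.ofReal r ≠ 0 := by simpa using hr
  have ha : 0 < (n : ℝ) + p * θ := by positivity
  have h1 : ∫⁻ z in ball x r, ENNReal.ofReal ‖f x - f z‖ ^ p ≤
      ENNReal.ofReal r ^ ((n : ℝ) + p * θ) * besovDensity p θ f x := by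
    unfold besovDensity
    rw [← lintegral_const_mul' _ _ (by finiteness)]
    refine (setLIntegral_mono' measurableSet_ball fun z hz => ?_).trans (setLIntegral_le_lintegral _ _)
    rcases eq_or_ne x z with rfl | hne
    · simp [hp0]
    · have hd : ENNReal.ofReal (dist x z) ≠ 0 := by simpa using hne
      have hd' : ENNReal.ofReal (dist x z) ^ ((n : ℝ) + p * θ) ≠ 0 := by
        simp [ENNReal.rpow_eq_zero_iff, hne]
      have hle : ENNReal.ofReal (dist x z) ^ ((n : ℝ) + p * θ) ≤
          ENNReal.ofReal r ^ ((n : ℝ) + p * θ) := by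
        refine ENNReal.rpow_le_rpow (ENNReal.ofReal_le_ofReal ?_) ha.le
        rw [dist_comm]; exact (mem_ball.1 hz).le
      calc ENNReal.ofReal ‖f x - f z‖ ^ p
          = ENNReal.ofReal (dist x z) ^ ((n : ℝ) + p * θ) * (ENNReal.ofReal ‖f x - f z‖ ^ p /
            ENNReal.ofReal (dist x z) ^ ((n : ℝ) + p * θ)) := by
            rw [ENNReal.mul_div_cancel hd' (by finiteness)]
        _ ≤ _ := by gcongr
  have h2 := lintegral_le_rpow_mul (μ := volume.restrict (ball x r)) hp
    (g := fun z => ENNReal.ofReal ‖f x - f z‖) (by fun_prop)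
  refine h2.trans ?_
  rw [Measure.restrict_apply_univ, volume_ball_eq x hr]
  refine (mul_le_mul_left (ENNReal.rpow_le_rpow h1 (by positivity)) _).trans_eq ?_
  have hq : 0 ≤ 1 - p⁻¹ := by simpa using inv_le_one_of_one_le₀ hp
  rw [ENNReal.mul_rpow_of_nonneg _ _ (by positivity), ENNReal.mul_rpow_of_nonneg _ _ hq,
    ← ENNReal.rpow_mul, ← ENNReal.rpow_mul]
  have : (n : ℝ) + θ = ((n : ℝ) + p * θ) * p⁻¹ + n * (1 - p⁻¹) := by field_simp; ring
  rw [this, ENNReal.rpow_add _ _ hR0 (by finiteness)]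
  ring

lemma measurable_besovDensity {p θ : ℝ} {f : EuclideanSpace ℝ (Fin n) → ℂ}
    (hf : Measurable f) : Measurable (besovDensity p θ f) := by
  unfold besovDensity
  apply Measurable.lintegral_prod_right'
    (f := fun q : EuclideanSpace ℝ (Fin n) × EuclideanSpace ℝ (Fin n) =>
      ENNReal.ofReal ‖f q.1 - f q.2‖ ^ p / ENNReal.ofReal (dist q.1 q.2) ^ ((n : ℝ) + p * θ))
  fun_prop

/-- The doubling bound: `|f x - f z| ≤ |f x - f w| + |f w - f z|` averaged over `z ∈ B(x, 2r)` and
`w ∈ B(x, r)`. The last term is controlled by applying the local bound on `B(z, 3r)` and then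
Hölder's inequality in `z`. -/
lemma ballOsc_two_mul_le {p θ : ℝ} (hp : 1 ≤ p) (hθ : 0 < θ) :
    ∃ c : ℝ≥0∞, c ≠ ⊤ ∧ ∀ f : EuclideanSpace ℝ (Fin n) → ℂ, Measurable f →
      ∀ x r, 0 < r → ballOsc f x (2 * r) ≤ 2 ^ (n : ℝ) * ballOsc f x r +
        c * ENNReal.ofReal r ^ ((n : ℝ) + θ - n / p) * (∫⁻ z, besovDensity p θ f z) ^ p⁻¹ := by
  set ω := volume (ball (0 : EuclideanSpace ℝ (Fin n)) 1) with hω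
  have hω0 : ω ≠ 0 := (measure_ball_pos _ _ one_pos).ne'
  have hωt : ω ≠ ⊤ := measure_ball_lt_top.ne
  have hq : 0 ≤ 1 - p⁻¹ := by simpa using inv_le_one_of_one_le₀ hp
  refine ⟨ω⁻¹ * (ω ^ (1 - p⁻¹) * 3 ^ ((n : ℝ) + θ) * (2 ^ (n : ℝ) * ω) ^ (1 - p⁻¹)),
    by finiteness, fun f hf x r hr => ?_⟩
  have hp0 : 0 < p := by linarith
  set R := ENNReal.ofReal r with hR
  have hR0 : R ≠ 0 := by simpa [hR] using hr
  have hRt : R ≠ ⊤ := ENNReal.ofReal_ne_top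
  have h2R : ENNReal.ofReal (2 * r) = 2 * R := by rw [ENNReal.ofReal_mul (by norm_num)]; simp [hR]
  have h3R : ENNReal.ofReal (3 * r) = 3 * R := by rw [ENNReal.ofReal_mul (by norm_num)]; simp [hR]
  have hW : ∫⁻ z in ball x (2 * r), ∫⁻ w in ball x r, ENNReal.ofReal ‖f z - f w‖ ≤
      ω ^ (1 - p⁻¹) * (3 * R) ^ ((n : ℝ) + θ) *
        ((∫⁻ z, besovDensity p θ f z) ^ p⁻¹ * ((2 * R) ^ (n : ℝ) * ω) ^ (1 - p⁻¹)) := by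
    calc ∫⁻ z in ball x (2 * r), ∫⁻ w in ball x r, ENNReal.ofReal ‖f z - f w‖
        ≤ ∫⁻ z in ball x (2 * r), ω ^ (1 - p⁻¹) * (3 * R) ^ ((n : ℝ) + θ) *
            besovDensity p θ f z ^ p⁻¹ := by
          refine setLIntegral_mono' measurableSet_ball fun z hz => ?_
          rw [← h3R]
          refine le_trans ?_ (ballOsc_le hp hθ hf z (by positivity))
          refine lintegral_mono_set (ball_subset_ball' ?_)
          rw [dist_comm]; linarith [mem_ball.1 hz]
      _ = ω ^ (1 - p⁻¹) * (3 * R) ^ ((n : ℝ) + θ) *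
            ∫⁻ z in ball x (2 * r), besovDensity p θ f z ^ p⁻¹ := by
          rw [lintegral_const_mul' _ _ (by finiteness)]
      _ ≤ _ := by
          refine mul_le_mul_right ?_ _
          refine (lintegral_le_rpow_mul hp ((measurable_besovDensity hf).pow_const _)).trans ?_
          rw [Measure.restrict_apply_univ, volume_ball_eq x (by positivity), h2R]
          simp only [← ENNReal.rpow_mul, inv_mul_cancel₀ hp0.ne', ENNReal.rpow_one]
          gcongr
          exact Measure.restrict_le_self
  have hmain : ballOsc f x (2 * r) * (R ^ (n : ℝ) * ω) ≤
      ballOsc f x r * ((2 * R) ^ (n : ℝ) * ω) +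
        ∫⁻ z in ball x (2 * r), ∫⁻ w in ball x r, ENNReal.ofReal ‖f z - f w‖ := by
    calc ballOsc f x (2 * r) * (R ^ (n : ℝ) * ω)
        = ∫⁻ z in ball x (2 * r), ∫⁻ w in ball x r, ENNReal.ofReal ‖f x - f z‖ := by
          simp only [lintegral_const, Measure.restrict_apply_univ]
          rw [lintegral_mul_const _ (by fun_prop), ← volume_ball_eq x hr]; rfl
      _ ≤ ∫⁻ z in ball x (2 * r), ∫⁻ w in ball x r,
            (ENNReal.ofReal ‖f x - f w‖ + ENNReal.ofReal ‖f z - f w‖) := by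
          refine lintegral_mono fun z => lintegral_mono fun w => ?_
          rw [norm_sub_rev (f z)]
          exact ofReal_norm_sub_le _ _ _
      _ = ∫⁻ z in ball x (2 * r), (ballOsc f x r +
            ∫⁻ w in ball x r, ENNReal.ofReal ‖f z - f w‖) := by
          refine lintegral_congr fun z => ?_
          rw [lintegral_add_left (by fun_prop)]; rfl
      _ = _ := by
          rw [lintegral_add_left measurable_const, lintegral_const, Measure.restrict_apply_univ,
            volume_ball_eq x (by positivity), h2R]
  have hV0 : R ^ (n : ℝ) * ω ≠ 0 := by
    simp [hω0, hR0]
  have hVt : R ^ (n : ℝ) * ω ≠ ⊤ := by finiteness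
  refine (ENNReal.le_div_iff_mul_le (Or.inl hV0) (Or.inl hVt)).2 (hmain.trans (add_le_add le_rfl hW))
    |>.trans_eq ?_
  have e1 : (2 * R) ^ (n : ℝ) = 2 ^ (n : ℝ) * R ^ (n : ℝ) :=
    ENNReal.mul_rpow_of_nonneg _ _ (by positivity)
  have e2 : (3 * R) ^ ((n : ℝ) + θ) = 3 ^ ((n : ℝ) + θ) * R ^ ((n : ℝ) + θ) :=
    ENNReal.mul_rpow_of_nonneg _ _ (by positivity)
  have e3 : ((2 * R) ^ (n : ℝ) * ω) ^ (1 - p⁻¹) =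
      (2 ^ (n : ℝ) * ω) ^ (1 - p⁻¹) * R ^ ((n : ℝ) * (1 - p⁻¹)) := by
    rw [e1, mul_right_comm, ENNReal.mul_rpow_of_nonneg _ _ hq, ← ENNReal.rpow_mul]
  have e4 : R ^ ((n : ℝ) + θ - n / p) =
      (R ^ (n : ℝ))⁻¹ * R ^ ((n : ℝ) + θ) * R ^ ((n : ℝ) * (1 - p⁻¹)) := by
    rw [← ENNReal.rpow_neg, ← ENNReal.rpow_add _ _ hR0 hRt, ← ENNReal.rpow_add _ _ hR0 hRt]
    congr 1; ring
  have e5 : (R ^ (n : ℝ) * ω)⁻¹ * (R ^ (n : ℝ) * ω) = 1 := ENNReal.inv_mul_cancel hV0 hVt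
  rw [ENNReal.div_eq_inv_mul, mul_add]
  congr 1
  · rw [e1]
    calc _ = (R ^ (n : ℝ) * ω)⁻¹ * (R ^ (n : ℝ) * ω) * (2 ^ (n : ℝ) * ballOsc f x r) := by ring
      _ = _ := by rw [e5, one_mul]
  · rw [e3, e2, e4, ENNReal.mul_inv (Or.inr hωt) (Or.inr hω0)]
    ring

/-! ### Growth in the radius and the kernel -/

/-- Iteration of the doubling bound, after rescaling so that the critical scale is `1`. Since
`θ - δ ≤ ε` and `ε > 0`, the increments sum geometrically to a growth of order `t ^ ε` for `t ≥ 1`. -/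
lemma growth_bound {θ ε δ c₁ c₂ : ℝ} (hc₁ : 0 ≤ c₁) (hε : 0 < ε) (hεθ : ε ≤ θ)
    (hδ : θ - δ ≤ ε) (hc₂ : 0 ≤ c₂) :
    ∃ A : ℝ, 0 ≤ A ∧ ∀ h : ℝ → ℝ, (∀ t, 0 < t → h t ≤ c₁ * t ^ θ) →
      (∀ t, 0 < t → h (2 * t) ≤ h t + c₂ * t ^ (θ - δ)) →
      ∀ t, 0 < t → h t ≤ A * min (t ^ θ) (t ^ ε) := by
  have h2 : 0 < (2 : ℝ) ^ ε - 1 := by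
    have := Real.one_lt_rpow (x := 2) (by norm_num) hε
    linarith
  set c₃ := c₂ * 2 ^ (ε - (θ - δ)) with hc₃
  have hc₃0 : 0 ≤ c₃ := by positivity
  refine ⟨c₁ + c₃ / (2 ^ ε - 1), by positivity, fun h h₁ hstep => ?_⟩
  -- this `A` satisfies `A + c₃ ≤ 2 ^ ε * A`, which lets the induction step close
  set A := c₁ + c₃ / (2 ^ ε - 1) with hA
  have hA₁ : c₁ ≤ A := by have : 0 ≤ c₃ / (2 ^ ε - 1) := by positivity
                          linarith
  have hA0 : 0 ≤ A := hc₁.trans hA₁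
  have hA₂ : A + c₃ ≤ 2 ^ ε * A := by
    have : c₃ / (2 ^ ε - 1) * (2 ^ ε - 1) = c₃ := div_mul_cancel₀ _ h2.ne'
    nlinarith [mul_nonneg hc₁ h2.le]
  have key : ∀ m : ℕ, ∀ t, 0 < t → t ≤ 2 ^ m → h t ≤ A * t ^ ε := by
    intro m
    have base : ∀ t, 0 < t → t ≤ 1 → h t ≤ A * t ^ ε := fun t ht ht1 =>
      (h₁ t ht).trans (mul_le_mul hA₁ (Real.rpow_le_rpow_of_exponent_ge ht ht1 hεθ)
        (by positivity) hA0)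
    induction m with
    | zero => intro t ht htm; exact base t ht (by simpa using htm)
    | succ m ih =>
      intro t ht htm
      rcases le_or_gt t 1 with h1 | h1
      · exact base t ht h1
      obtain ⟨s, rfl⟩ : ∃ s, t = 2 * s := ⟨t / 2, by ring⟩
      have hs : 0 < s := by linarith
      have hs' := ih s hs (by rw [pow_succ] at htm; linarith)
      have hpow : s ^ (θ - δ) ≤ 2 ^ (ε - (θ - δ)) * s ^ ε := by
        have : 1 ≤ (2 * s) ^ (ε - (θ - δ)) := Real.one_le_rpow h1.le (by linarith)
        rw [Real.mul_rpow (by norm_num) hs.le] at this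
        calc s ^ (θ - δ) ≤ (2 ^ (ε - (θ - δ)) * s ^ (ε - (θ - δ))) * s ^ (θ - δ) :=
              le_mul_of_one_le_left (by positivity) this
          _ = _ := by rw [mul_assoc, ← Real.rpow_add hs]; congr 2; ring
      calc h (2 * s) ≤ A * s ^ ε + c₃ * s ^ ε := by
            refine (hstep s hs).trans (add_le_add hs' ?_)
            rw [hc₃, mul_assoc]
            exact mul_le_mul_of_nonneg_left hpow hc₂
        _ = (A + c₃) * s ^ ε := by ring
        _ ≤ (2 ^ ε * A) * s ^ ε := by gcongr
        _ = A * (2 * s) ^ ε := by rw [Real.mul_rpow (by norm_num) hs.le]; ring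
  intro t ht
  rw [mul_min_of_nonneg _ _ hA0]
  refine le_min ((h₁ t ht).trans (by gcongr)) ?_
  obtain ⟨m, hm⟩ := pow_unbounded_of_one_lt t (one_lt_two)
  exact key m t ht hm.le

/-- The rescaled kernel is integrable: in polar coordinates it behaves like `t ^ (-1 + q (θ - θ₁))`
near `0` and like `t ^ (-1 - q (θ₁ - ε))` near infinity. -/
lemma kernel_lt_top {n : ℕ} (hn : n ≠ 0) {q θ ε θ₁ : ℝ} (hq : 0 < q) (hε : ε < θ₁) (hθ : θ₁ < θ) :
    ∫⁻ y : EuclideanSpace ℝ (Fin n), ENNReal.ofReal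
      (min (‖y‖ ^ θ) (‖y‖ ^ ε) ^ q / ‖y‖ ^ ((n : ℝ) + q * θ₁)) < ⊤ := by
  have : Nonempty (Fin n) := ⟨⟨0, Nat.pos_of_ne_zero hn⟩⟩
  set k : ℝ → ℝ := fun t => min (t ^ θ) (t ^ ε) ^ q / t ^ ((n : ℝ) + q * θ₁) with hk
  have hkm : Measurable k := by fun_prop
  have hint : IntegrableOn (fun t : ℝ => t ^ (n - 1) • k t) (Set.Ioi 0) := by
    have bound : ∀ s : ℝ, ∀ t : ℝ, 0 < t → min (t ^ θ) (t ^ ε) ≤ t ^ s →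
        ‖t ^ (n - 1) • k t‖ ≤ t ^ (-1 + q * (s - θ₁)) := by
      intro s t ht hs
      have h0 : 0 ≤ min (t ^ θ) (t ^ ε) := by positivity
      have hnat : t ^ (n - 1) = t ^ ((n : ℝ) - 1) := by
        rw [← Real.rpow_natCast, Nat.cast_sub (Nat.pos_of_ne_zero hn)]; simp
      rw [Real.norm_of_nonneg (by simp only [smul_eq_mul, hk]; positivity)]
      simp only [smul_eq_mul, hk]
      calc t ^ (n - 1) * (min (t ^ θ) (t ^ ε) ^ q / t ^ ((n : ℝ) + q * θ₁))
          ≤ t ^ ((n : ℝ) - 1) * ((t ^ s) ^ q / t ^ ((n : ℝ) + q * θ₁)) := by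
            rw [hnat]; gcongr
        _ = _ := by
            rw [← Real.rpow_mul ht.le, ← Real.rpow_sub ht, ← Real.rpow_add ht]; congr 1; ring
    rw [← Set.Ioc_union_Ioi_eq_Ioi zero_le_one]
    refine IntegrableOn.union ?_ ?_
    · have : IntegrableOn (fun t : ℝ => t ^ (-1 + q * (θ - θ₁))) (Set.Ioc 0 1) := by
        rw [integrableOn_Ioc_iff_integrableOn_Ioo, intervalIntegral.integrableOn_Ioo_rpow_iff one_pos]
        nlinarith
      refine Integrable.mono' this (by fun_prop) ?_
      filter_upwards [ae_restrict_mem measurableSet_Ioc] with t ht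
      exact bound θ t ht.1 (min_le_left _ _)
    · have : IntegrableOn (fun t : ℝ => t ^ (-1 + q * (ε - θ₁))) (Set.Ioi 1) := by
        rw [integrableOn_Ioi_rpow_iff one_pos]
        nlinarith
      refine Integrable.mono' this (by fun_prop) ?_
      filter_upwards [ae_restrict_mem measurableSet_Ioi] with t ht
      exact bound ε t (zero_lt_one.trans ht) (min_le_right _ _)
  have := (integrable_fun_norm_addHaar (E := EuclideanSpace ℝ (Fin n)) volume (f := k)).2
    (by simpa using hint)
  exact this.lintegral_lt_top

lemma kernel_scale {n : ℕ} (k : ℝ → ℝ≥0∞) (hk : Measurable k)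
    (x : EuclideanSpace ℝ (Fin n)) {ρ : ℝ} (hρ : 0 < ρ) :
    ∫⁻ y : EuclideanSpace ℝ (Fin n), k (dist x y / ρ) =
      ENNReal.ofReal ρ ^ (n : ℝ) * ∫⁻ y : EuclideanSpace ℝ (Fin n), k ‖y‖ := by
  have h1 := lintegral_sub_left_eq_self (μ := (volume : Measure (EuclideanSpace ℝ (Fin n)))) (fun y => k (‖y‖ / ρ)) x
  simp only [dist_eq_norm]
  rw [h1]
  have h2 := Measure.map_addHaar_smul (volume : Measure (EuclideanSpace ℝ (Fin n))) (r := ρ⁻¹) (by positivity)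
  have h3 : ∫⁻ y, k ‖y‖ ∂(Measure.map (ρ⁻¹ • ·) (volume : Measure (EuclideanSpace ℝ (Fin n)))) =
      ∫⁻ y : EuclideanSpace ℝ (Fin n), k (‖y‖ / ρ) := by
    rw [lintegral_map (by fun_prop) (by fun_prop)]
    refine lintegral_congr fun y => ?_
    rw [norm_smul, Real.norm_of_nonneg (by positivity), div_eq_inv_mul]
  rw [← h3, h2, lintegral_smul_measure, finrank_euclideanSpace_fin, smul_eq_mul]
  congr 1
  rw [inv_pow, inv_inv, abs_of_pos (by positivity), ENNReal.ofReal_pow hρ.le, ENNReal.rpow_natCast]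

/-! ### The embedding -/

/-- Hedberg-type estimate: with `Φ = besovDensity p θ f`, the oscillation part of the `q`-seminorm
density at `x` is at most a multiple of `Φ(x) (∫ Φ)^{(q - p)/p}`. -/
lemma lintegral_ballOsc_le (hn : n ≠ 0) {p q θ θ₁ : ℝ} (hp : 1 ≤ p) (hpq : p < q)
    (hθ₁0 : 0 < θ₁) (hθ₁ : θ₁ < θ) (hrel : θ₁ - (n : ℝ) / q = θ - (n : ℝ) / p) :
    ∃ C : ℝ≥0∞, C ≠ ⊤ ∧ ∀ f : EuclideanSpace ℝ (Fin n) → ℂ, Measurable f →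
      (∫⁻ z, besovDensity p θ f z) ≠ ⊤ → ∀ x, besovDensity p θ f x ≠ ⊤ →
      (besovDensity p θ f x = 0 ∨ (∫⁻ z, besovDensity p θ f z) ≠ 0) →
      ∫⁻ y, (ballOsc f x (2 * dist x y) / ENNReal.ofReal (dist x y) ^ (n : ℝ)) ^ q /
          ENNReal.ofReal (dist x y) ^ ((n : ℝ) + q * θ₁) ≤
        C * besovDensity p θ f x * (∫⁻ z, besovDensity p θ f z) ^ ((q - p) / p) := by
  have hp0 : 0 < p := by linarith
  have hq0 : 0 < q := by linarith
  have hn0 : (0 : ℝ) < n := by exact_mod_cast Nat.pos_of_ne_zero hn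
  have hθ0 : 0 < θ := by linarith
  set δ : ℝ := n / p with hδ
  have hδ0 : 0 < δ := by positivity
  -- an exponent strictly between `max 0 (θ - δ)` and `θ₁`
  obtain ⟨ε, hε0, hεθ₁⟩ : ∃ ε, max 0 (θ - δ) < ε ∧ ε < θ₁ := by
    refine exists_between (max_lt hθ₁0 ?_)
    have : 0 < (n : ℝ) / q := by positivity
    linarith
  obtain ⟨hε, hεδ⟩ := max_lt_iff.1 hε0
  obtain ⟨c, hc, hstep⟩ := ballOsc_two_mul_le (n := n) hp hθ0
  set ω := volume (ball (0 : EuclideanSpace ℝ (Fin n)) 1) with hω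
  have hωt : ω ≠ ⊤ := measure_ball_lt_top.ne
  have hexp : 0 ≤ 1 - p⁻¹ := by simpa using inv_le_one_of_one_le₀ hp
  have hω' : ω ^ (1 - p⁻¹) ≠ ⊤ := by finiteness
  set c₁ := (ω ^ (1 - p⁻¹)).toReal with hc₁
  set c₂ := c.toReal with hc₂
  obtain ⟨A, hA, hgrowth⟩ := growth_bound (θ := θ) (ε := ε) (δ := δ) (c₁ := c₁) (c₂ := c₂ / 2 ^ (n : ℝ))
    toReal_nonneg hε (by linarith) hεδ.le (by positivity)
  set k : ℝ → ℝ := fun t => min (t ^ θ) (t ^ ε) ^ q / t ^ ((n : ℝ) + q * θ₁) with hk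
  have hkm : Measurable k := by fun_prop
  have hK := kernel_lt_top (q := q) hn hq0 hεθ₁ hθ₁
  set K := ∫⁻ y : EuclideanSpace ℝ (Fin n), ENNReal.ofReal
      (min (‖y‖ ^ θ) (‖y‖ ^ ε) ^ q / ‖y‖ ^ ((n : ℝ) + q * θ₁)) with hKdef
  refine ⟨ENNReal.ofReal ((2 ^ (n : ℝ) * A) ^ q * 2 ^ (q * θ₁)) * K, by finiteness,
    fun f hf hMt x hΦt hx => ?_⟩
  have hosc := fun r hr => ballOsc_le hp hθ0 hf x (r := r) hr
  rcases eq_or_ne (besovDensity p θ f x) 0 with hΦ0 | hΦ0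
  · have hz : ∀ y, ballOsc f x (2 * dist x y) = 0 := by
      intro y
      rcases eq_or_ne x y with rfl | hne
      · simp [ballOsc]
      · have := hosc (2 * dist x y) (by have := dist_pos.2 hne; positivity)
        rw [hΦ0, ENNReal.zero_rpow_of_pos (by positivity), mul_zero] at this
        exact le_antisymm this bot_le
    simp [hz, hq0]
  have hM0 := hx.resolve_left hΦ0
  set Φ := besovDensity p θ f x with hΦ
  set N := ∫⁻ z, besovDensity p θ f z with hN
  have hΦp : Φ ^ p⁻¹ ≠ ⊤ := by finiteness
  have hNp : N ^ p⁻¹ ≠ ⊤ := by finiteness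
  set F := (Φ ^ p⁻¹).toReal with hF
  set M := (N ^ p⁻¹).toReal with hM
  have hF0 : 0 < F := ENNReal.toReal_pos (by simp [ENNReal.rpow_eq_zero_iff, hΦ0, hΦt]) hΦp
  have hMpos : 0 < M := ENNReal.toReal_pos (by simp [ENNReal.rpow_eq_zero_iff, hM0, hMt]) hNp
  -- the critical scale, at which the local and the global bounds balance
  obtain ⟨ρ, hρ, hρM⟩ : ∃ ρ : ℝ, 0 < ρ ∧ F * ρ ^ δ = M := by
    refine ⟨(M / F) ^ δ⁻¹, by positivity, ?_⟩
    rw [← Real.rpow_mul (by positivity), inv_mul_cancel₀ hδ0.ne', Real.rpow_one]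
    field_simp
  have hfin : ∀ r, 0 < r → ballOsc f x r ≠ ⊤ := fun r hr =>
    ne_top_of_le_ne_top (by finiteness) (hosc r hr)
  set G : ℝ → ℝ := fun r => (ballOsc f x r).toReal with hG
  have hG₁ : ∀ r, 0 < r → G r ≤ c₁ * r ^ ((n : ℝ) + θ) * F := by
    intro r hr
    have := ENNReal.toReal_mono (by finiteness) (hosc r hr)
    simpa [ENNReal.toReal_mul, ← ENNReal.toReal_rpow, ENNReal.toReal_ofReal hr.le, hc₁, hF, hG] using this
  have hG₂ : ∀ r, 0 < r → G (2 * r) ≤ 2 ^ (n : ℝ) * G r + c₂ * r ^ ((n : ℝ) + θ - δ) * M := by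
    intro r hr
    have hr0 : ENNReal.ofReal r ≠ 0 := by simpa using hr
    have hb := hfin r hr
    have hr' : ENNReal.ofReal r ^ ((n : ℝ) + θ - n / p) ≠ ⊤ := by finiteness
    have := ENNReal.toReal_mono (by finiteness) (hstep f hf x r hr)
    rw [ENNReal.toReal_add (by finiteness) (by finiteness)] at this
    simpa [ENNReal.toReal_mul, ← ENNReal.toReal_rpow, ENNReal.toReal_ofReal hr.le, hM, hG, hc₂] using this
  have hGmin : ∀ t, 0 < t → G (ρ * t) ≤
      A * F * ρ ^ θ * (ρ * t) ^ (n : ℝ) * min (t ^ θ) (t ^ ε) := by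
    have := hgrowth (fun t => G (ρ * t) / ((ρ * t) ^ (n : ℝ) * (F * ρ ^ θ))) ?_ ?_
    · intro t ht
      have := this t ht
      rw [div_le_iff₀ (by positivity)] at this
      exact this.trans_eq (by ring)
    · intro t ht
      rw [div_le_iff₀ (by positivity)]
      refine (hG₁ _ (by positivity)).trans_eq ?_
      rw [Real.rpow_add (by positivity), Real.mul_rpow (z := θ) hρ.le ht.le]
      ring
    · intro t ht
      have hden : (ρ * (2 * t)) ^ (n : ℝ) = 2 ^ (n : ℝ) * (ρ * t) ^ (n : ℝ) := by
        rw [← Real.mul_rpow (by norm_num) (by positivity)]; congr 1; ring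
      rw [hden, div_le_iff₀ (by positivity), show ρ * (2 * t) = 2 * (ρ * t) by ring]
      refine (hG₂ _ (by positivity)).trans_eq ?_
      have e : (ρ * t) ^ ((n : ℝ) + θ - δ) * M =
          t ^ (θ - δ) * ((ρ * t) ^ (n : ℝ) * (F * ρ ^ θ)) := by
        rw [← hρM, add_sub_assoc, Real.rpow_add (by positivity),
          Real.mul_rpow (z := θ - δ) hρ.le ht.le]
        have : ρ ^ θ = ρ ^ (θ - δ) * ρ ^ δ := by rw [← Real.rpow_add hρ]; congr 1; ring
        rw [this]; ring
      rw [mul_assoc c₂, e]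
      have h2n : (2 : ℝ) ^ (n : ℝ) ≠ 0 := by positivity
      have hX : (ρ * t) ^ (n : ℝ) ≠ 0 := by positivity
      have hY : F * ρ ^ θ ≠ 0 := by positivity
      generalize (ρ * t) ^ (n : ℝ) = X at hX ⊢
      generalize F * ρ ^ θ = Y at hY ⊢
      field_simp
  -- halving `ρ` absorbs the factor `2` in the radius `2 * dist x y`
  set ρ' := ρ / 2 with hρ'
  have hρ'0 : 0 < ρ' := by positivity
  set B : ℝ := (2 ^ (n : ℝ) * A * F * ρ ^ θ) ^ q / ρ' ^ ((n : ℝ) + q * θ₁) with hB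
  have hB0 : 0 ≤ B := by positivity
  have hpt : ∀ y, (ballOsc f x (2 * dist x y) / ENNReal.ofReal (dist x y) ^ (n : ℝ)) ^ q /
      ENNReal.ofReal (dist x y) ^ ((n : ℝ) + q * θ₁) ≤
      ENNReal.ofReal B * ENNReal.ofReal (k (dist x y / ρ')) := by
    intro y
    rcases eq_or_ne x y with rfl | hne
    · simp [ballOsc, hq0]
    have hd : 0 < dist x y := dist_pos.2 hne
    generalize dist x y = d at hd
    rw [← ENNReal.ofReal_toReal (hfin (2 * d) (by positivity)), ENNReal.ofReal_rpow_of_pos hd,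
      ENNReal.ofReal_rpow_of_pos hd, ← ENNReal.ofReal_div_of_pos (by positivity),
      ENNReal.ofReal_rpow_of_nonneg (by positivity) hq0.le,
      ← ENNReal.ofReal_div_of_pos (by positivity), ← ENNReal.ofReal_mul hB0]
    refine ENNReal.ofReal_le_ofReal ?_
    have hle := hGmin (d / ρ') (by positivity)
    have e1 : ρ * (d / ρ') = 2 * d := by rw [hρ']; field_simp
    rw [e1, Real.mul_rpow (x := 2) (by norm_num) hd.le] at hle
    have hle' : G (2 * d) / d ^ (n : ℝ) ≤
        (2 ^ (n : ℝ) * A * F * ρ ^ θ) * min ((d / ρ') ^ θ) ((d / ρ') ^ ε) := by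
      rw [div_le_iff₀ (by positivity)]
      exact hle.trans_eq (by ring)
    have hG0 : 0 ≤ G (2 * d) / d ^ (n : ℝ) := by
      have : 0 ≤ G (2 * d) := toReal_nonneg
      positivity
    calc (G (2 * d) / d ^ (n : ℝ)) ^ q / d ^ ((n : ℝ) + q * θ₁)
        ≤ ((2 ^ (n : ℝ) * A * F * ρ ^ θ) * min ((d / ρ') ^ θ) ((d / ρ') ^ ε)) ^ q /
            d ^ ((n : ℝ) + q * θ₁) := by gcongr
      _ = B * k (d / ρ') := by
        simp only [hB, hk]
        rw [Real.mul_rpow (by positivity) (by positivity),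
          Real.div_rpow (z := (n : ℝ) + q * θ₁) hd.le hρ'0.le]
        field_simp
  refine (lintegral_mono hpt).trans ?_
  rw [lintegral_const_mul' _ _ (by finiteness),
    kernel_scale (fun t => ENNReal.ofReal (k t)) (by fun_prop) x hρ'0]
  change ENNReal.ofReal B * (ENNReal.ofReal ρ' ^ (n : ℝ) * K) ≤ _
  have hΦF : Φ = ENNReal.ofReal (F ^ p) := by
    rw [← ENNReal.ofReal_rpow_of_nonneg hF0.le hp0.le, ENNReal.ofReal_toReal hΦp, ← ENNReal.rpow_mul,
      inv_mul_cancel₀ hp0.ne', ENNReal.rpow_one]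
  have hNM : N ^ ((q - p) / p) = ENNReal.ofReal (M ^ (q - p)) := by
    rw [← ENNReal.ofReal_rpow_of_nonneg hMpos.le (by linarith), ENNReal.ofReal_toReal hNp,
      ← ENNReal.rpow_mul]
    congr 1; ring
  -- `F ^ q * ρ ^ (q * (θ - θ₁)) = F ^ p * M ^ (q - p)`
  have hbal : B * ρ' ^ (n : ℝ) = (2 ^ (n : ℝ) * A) ^ q * 2 ^ (q * θ₁) * F ^ p * M ^ (q - p) := by
    have hexp' : θ * q = q * θ₁ + δ * (q - p) := by
      have h1 : θ = θ₁ - n / q + n / p := by linarith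
      rw [h1, hδ]; field_simp; ring
    have hFq : F ^ q = F ^ p * F ^ (q - p) := by rw [← Real.rpow_add hF0]; congr 1; ring
    rw [hB, ← hρM, Real.rpow_add hρ'0, Real.mul_rpow (by positivity) (by positivity),
      Real.mul_rpow (by positivity) hF0.le, Real.mul_rpow hF0.le (by positivity),
      ← Real.rpow_mul hρ.le, ← Real.rpow_mul hρ.le, hexp', Real.rpow_add hρ, hFq, hρ',
      Real.div_rpow hρ.le (by norm_num), Real.div_rpow hρ.le (by norm_num)]
    field_simp
  rw [← mul_assoc, ENNReal.ofReal_rpow_of_pos hρ'0, ← ENNReal.ofReal_mul hB0, hbal, hΦF, hNM,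
    ENNReal.ofReal_mul (by positivity), ENNReal.ofReal_mul (by positivity)]
  exact le_of_eq (by ring)


lemma measurable_ballOsc_two_dist {f : EuclideanSpace ℝ (Fin n) → ℂ} (hf : Measurable f) :
    Measurable fun q : EuclideanSpace ℝ (Fin n) × EuclideanSpace ℝ (Fin n) =>
      ballOsc f q.1 (2 * dist q.1 q.2) := by
  have hS : MeasurableSet {w : (EuclideanSpace ℝ (Fin n) × EuclideanSpace ℝ (Fin n)) ×
      EuclideanSpace ℝ (Fin n) | dist w.2 w.1.1 < 2 * dist w.1.1 w.1.2} :=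
    measurableSet_lt (by fun_prop) (by fun_prop)
  have : Measurable (fun w : (EuclideanSpace ℝ (Fin n) × EuclideanSpace ℝ (Fin n)) ×
      EuclideanSpace ℝ (Fin n) => ENNReal.ofReal ‖f w.1.1 - f w.2‖) := by fun_prop
  convert (this.indicator hS).lintegral_prod_right' (ν := volume) using 2 with q
  rw [ballOsc, ← lintegral_indicator measurableSet_ball]
  rfl

/-- Averaging `|f x - f y| ≤ |f x - f z| + |f z - f y|` over `z ∈ B(x, |x - y|)`, a ball contained in
`B(y, 2|x - y|)`. At `x = y` both sides vanish. -/
lemma ofReal_norm_sub_le_ballOsc {f : EuclideanSpace ℝ (Fin n) → ℂ} (hf : Measurable f)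
    (x y : EuclideanSpace ℝ (Fin n)) :
    ENNReal.ofReal ‖f x - f y‖ ≤ (volume (ball (0 : EuclideanSpace ℝ (Fin n)) 1))⁻¹ *
      (ballOsc f x (2 * dist x y) / ENNReal.ofReal (dist x y) ^ (n : ℝ) +
        ballOsc f y (2 * dist x y) / ENNReal.ofReal (dist x y) ^ (n : ℝ)) := by
  rcases eq_or_ne x y with rfl | hne
  · simp
  have hd : 0 < dist x y := dist_pos.2 hne
  have hR0 : ENNReal.ofReal (dist x y) ≠ 0 := by simpa using hne
  have hω0 : volume (ball (0 : EuclideanSpace ℝ (Fin n)) 1) ≠ 0 := (measure_ball_pos _ _ one_pos).ne'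
  have hωt : volume (ball (0 : EuclideanSpace ℝ (Fin n)) 1) ≠ ⊤ := measure_ball_lt_top.ne
  have key : ENNReal.ofReal ‖f x - f y‖ * volume (ball x (dist x y)) ≤
      ballOsc f x (2 * dist x y) + ballOsc f y (2 * dist x y) := by
    calc ENNReal.ofReal ‖f x - f y‖ * volume (ball x (dist x y))
        = ∫⁻ z in ball x (dist x y), ENNReal.ofReal ‖f x - f y‖ := by simp
      _ ≤ ∫⁻ z in ball x (dist x y), (ENNReal.ofReal ‖f x - f z‖ + ENNReal.ofReal ‖f y - f z‖) := by
          refine lintegral_mono fun z => ?_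
          rw [norm_sub_rev (f y)]
          exact ofReal_norm_sub_le _ _ _
      _ ≤ _ := by
          rw [lintegral_add_left (by fun_prop)]
          refine add_le_add (lintegral_mono_set (ball_subset_ball (by linarith)))
            (lintegral_mono_set (ball_subset_ball' (by linarith)))
  rw [volume_ball_eq x hd, ← ENNReal.le_div_iff_mul_le (Or.inl (by simp [hR0, hω0]))
    (Or.inl (by finiteness))] at key
  refine key.trans_eq ?_
  rw [ENNReal.div_eq_inv_mul, ENNReal.mul_inv (Or.inr hωt) (Or.inr hω0), ENNReal.div_eq_inv_mul,
    ENNReal.div_eq_inv_mul]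
  ring

lemma besovNorm_le_of_measurable (hn : n ≠ 0) {p q θ θ₁ : ℝ} (hp : 1 ≤ p) (hpq : p < q)
    (hθ₁0 : 0 < θ₁) (hθ₁ : θ₁ < θ) (hrel : θ₁ - (n : ℝ) / q = θ - (n : ℝ) / p) :
    ∃ C : ℝ≥0∞, C < ⊤ ∧ ∀ f : EuclideanSpace ℝ (Fin n) → ℂ, Measurable f →
      besovNorm n q θ₁ f ≤ C * besovNorm n p θ f := by
  have hp0 : 0 < p := by linarith
  have hq0 : 0 < q := by linarith
  obtain ⟨C, hC, hmain⟩ := lintegral_ballOsc_le hn hp hpq hθ₁0 hθ₁ hrel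
  set ω := volume (ball (0 : EuclideanSpace ℝ (Fin n)) 1) with hω
  have hω0 : ω ≠ 0 := (measure_ball_pos _ _ one_pos).ne'
  have hω' : ω⁻¹ ≠ ⊤ := by simpa using hω0
  have hq1 : 0 ≤ q - 1 := by linarith
  set D := ω⁻¹ ^ q * 2 ^ (q - 1) with hD
  have hDt : D ≠ ⊤ := by finiteness
  -- the summand `1` keeps the constant nonzero, so that `C' * ⊤ = ⊤`
  set C' := (D * (C + C)) ^ q⁻¹ + 1 with hC'
  have hCt : (D * (C + C)) ^ q⁻¹ ≠ ⊤ := by finiteness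
  refine ⟨C', by finiteness, fun f hf => ?_⟩
  set N := ∫⁻ z, besovDensity p θ f z with hN
  change _ ≤ C' * N ^ p⁻¹
  rcases eq_or_ne N ⊤ with hNt | hNt
  · rw [hNt, ENNReal.top_rpow_of_pos (by positivity), ENNReal.mul_top (by simp [hC'])]
    exact le_top
  have hmeas := measurable_besovDensity (p := p) (θ := θ) hf
  have hae : ∀ᵐ x, besovDensity p θ f x ≠ ⊤ ∧ (besovDensity p θ f x = 0 ∨ N ≠ 0) := by
    have h1 := ae_lt_top hmeas hNt
    rcases eq_or_ne N 0 with h0 | h0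
    · filter_upwards [h1, (lintegral_eq_zero_iff hmeas).1 h0] with x hx hx0
      exact ⟨hx.ne, Or.inl hx0⟩
    · filter_upwards [h1] with x hx
      exact ⟨hx.ne, Or.inr h0⟩
  set u : EuclideanSpace ℝ (Fin n) → EuclideanSpace ℝ (Fin n) → ℝ≥0∞ := fun x y =>
    (ballOsc f x (2 * dist x y) / ENNReal.ofReal (dist x y) ^ (n : ℝ)) ^ q /
      ENNReal.ofReal (dist x y) ^ ((n : ℝ) + q * θ₁) with hu
  have hum : Measurable (Function.uncurry u) := by
    have := measurable_ballOsc_two_dist hf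
    simp only [hu, Function.uncurry_def]
    fun_prop
  have hux : ∫⁻ x, ∫⁻ y, u x y ≤ C * N ^ (q / p) := by
    have hNN : N * N ^ ((q - p) / p) = N ^ (q / p) := by
      have h1 : q / p = 1 + (q - p) / p := by field_simp; ring
      have h2 : 0 ≤ (q - p) / p := div_nonneg (by linarith) hp0.le
      rw [h1, ENNReal.rpow_add_of_nonneg _ _ zero_le_one h2, ENNReal.rpow_one]
    have hexp : 0 ≤ (q - p) / p := div_nonneg (by linarith) hp0.le
    calc ∫⁻ x, ∫⁻ y, u x y
        ≤ ∫⁻ x, C * besovDensity p θ f x * N ^ ((q - p) / p) := by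
          refine lintegral_mono_ae ?_
          filter_upwards [hae] with x hx
          exact hmain f hf hNt x hx.1 hx.2
      _ = C * (N * N ^ ((q - p) / p)) := by
          rw [lintegral_mul_const' _ _ (by finiteness), lintegral_const_mul' _ _ hC, mul_assoc]
      _ = _ := by rw [hNN]
  have hpt : ∀ x y, ENNReal.ofReal ‖f x - f y‖ ^ q / ENNReal.ofReal (dist x y) ^ ((n : ℝ) + q * θ₁) ≤
      D * (u x y + u y x) := by
    intro x y
    have h1 := ENNReal.rpow_le_rpow (ofReal_norm_sub_le_ballOsc hf x y) hq0.le
    rw [ENNReal.mul_rpow_of_nonneg _ _ hq0.le] at h1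
    have h2 := h1.trans (mul_le_mul_right (ENNReal.rpow_add_le_mul_rpow_add_rpow _ _ (hpq.le.trans' hp)) _)
    refine (ENNReal.div_le_div_right h2 _).trans_eq ?_
    simp only [hu, hD, dist_comm y x, ENNReal.div_eq_inv_mul]
    ring
  have hI : (∫⁻ x, ∫⁻ y, ENNReal.ofReal ‖f x - f y‖ ^ q /
      ENNReal.ofReal (dist x y) ^ ((n : ℝ) + q * θ₁)) ≤ D * (C + C) * N ^ (q / p) := by
    calc _ ≤ ∫⁻ x, ∫⁻ y, D * (u x y + u y x) :=
          lintegral_mono fun x => lintegral_mono fun y => hpt x y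
      _ = D * ((∫⁻ x, ∫⁻ y, u x y) + ∫⁻ x, ∫⁻ y, u y x) := by
          simp_rw [lintegral_const_mul' D _ hDt]
          congr 1
          have hum' : Measurable fun x => ∫⁻ y, u x y := hum.lintegral_prod_right'
          rw [← lintegral_add_left hum']
          refine lintegral_congr fun x => ?_
          rw [lintegral_add_left (hum.of_uncurry_left)]
      _ = D * ((∫⁻ x, ∫⁻ y, u x y) + ∫⁻ x, ∫⁻ y, u x y) := by
          rw [lintegral_lintegral_swap (f := fun x y => u y x)
            (hum.comp measurable_swap).aemeasurable]
      _ ≤ D * (C * N ^ (q / p) + C * N ^ (q / p)) := by gcongr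
      _ = _ := by ring
  calc besovNorm n q θ₁ f ≤ (D * (C + C) * N ^ (q / p)) ^ q⁻¹ :=
        ENNReal.rpow_le_rpow hI (by positivity)
    _ = (D * (C + C)) ^ q⁻¹ * N ^ p⁻¹ := by
        rw [ENNReal.mul_rpow_of_nonneg _ _ (by positivity), ← ENNReal.rpow_mul]
        congr 2; field_simp
    _ ≤ _ := by gcongr; exact le_self_add

lemma besovNorm_congr_ae {p θ : ℝ} {f g : EuclideanSpace ℝ (Fin n) → ℂ} (h : f =ᵐ[volume] g) :
    besovNorm n p θ f = besovNorm n p θ g := by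
  unfold besovNorm
  congr 1
  refine lintegral_congr_ae ?_
  filter_upwards [h] with x hx
  refine lintegral_congr_ae ?_
  filter_upwards [h] with y hy
  rw [hx, hy]

end

/-- Besov embedding, Jawerth. If `1 ≤ p₀ < p₁ < ∞`, `0 < θ₁ < θ₀ < 1`
and `θ₁ − n/p₁ = θ₀ − n/p₀`, then `Ḃ^{p₀,p₀}_{θ₀}(ℝ^n) ⊂ Ḃ^{p₁,p₁}_{θ₁}(ℝ^n)` with a norm
bound whose constant depends only on `n, p₀, p₁, θ₀, θ₁`. -/
theorem besov_embedding (n : ℕ) (p₀ p₁ θ₀ θ₁ : ℝ) (hp₀ : 1 ≤ p₀) (hp₀₁ : p₀ < p₁)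
    (hθ₁0 : 0 < θ₁) (hθ₁₀ : θ₁ < θ₀) (hθ₀1 : θ₀ < 1)
    (hrel : θ₁ - (n : ℝ) / p₁ = θ₀ - (n : ℝ) / p₀) :
    ∃ C : ℝ≥0∞, C < ⊤ ∧
      ∀ f : EuclideanSpace ℝ (Fin n) → ℂ, LocallyIntegrable f volume →
        besovNorm n p₁ θ₁ f ≤ C * besovNorm n p₀ θ₀ f := by
  -- for `n = 0` the scaling relation would force `θ₁ = θ₀`
  have hn : n ≠ 0 := by
    rintro rfl
    norm_num at hrel
    linarith
  obtain ⟨C, hC, hmain⟩ := besovNorm_le_of_measurable hn hp₀ hp₀₁ hθ₁0 hθ₁₀ hrel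
  refine ⟨C, hC, fun f hf => ?_⟩
  have hm := hf.aestronglyMeasurable
  rw [besovNorm_congr_ae hm.ae_eq_mk, besovNorm_congr_ae (p := p₀) hm.ae_eq_mk]
  exact hmain _ hm.stronglyMeasurable_mk.measurable

end
end

section
/- Let Q ⊂ ℝ^n be a cube, let 0 < θ₀ < 1, 0 < θ₁ < 1, 0 < p₀ ≤ ∞ and 1 ≤ p₁ < ∞. Suppose a : ℝ^n → ℂ is Lipschitz, supported in the concentric triple cube 3Q, and satisfies ‖a‖_{L^∞} ≤ |Q|^{θ₀/n − 1/p₀} and ‖∇a‖_{L^∞} ≤ |Q|^{θ₀/n − 1/p₀ − 1/n}. Then ‖a‖_{Ḃ^{p₁,p₁}_{θ₁}(ℝ^n)} ≤ C |Q|^{θ₀/n − 1/p₀ − θ₁/n + 1/p₁}, where C depends only on n, p₁ and θ₁, and |Q| denotes the Lebesgue measure of Q. -/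
/-!
Write `A` for the bound on `‖a‖_∞`, so that the Lipschitz constant of `a` is `A / ℓ`. Hence
`‖a x - a y‖ ≤ A * min 2 (‖x - y‖ / ℓ)`, and the difference vanishes unless `x` or `y` lies in the
tripled cube, which is contained in a ball `B` of radius comparable to `ℓ`. The Besov integrand is
therefore at most `(1_B x + 1_B y) * A ^ p * ℓ ^ (-s) * k (‖x - y‖ / ℓ)`, where `s = n + p θ` and
`k r = (min 2 r) ^ p * r ^ (-s)` (`atom_integrand_le`).

In polar coordinates `k ‖·‖` is integrable on `ℝ^n`: near the origin it is at most `r ^ (p - s)`,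
which is integrable because `θ < 1`, and at infinity it is at most `2 ^ p * r ^ (-s)`, which is
integrable because `θ > 0` (`integrable_besovKernel`). Tonelli, translation invariance and the
dilation by `ℓ` bound the double integral by `2 * |B| * A ^ p * ℓ ^ (-s) * ℓ ^ n * ∫ k ‖v‖ dv`
(`lintegral_lintegral_le`). As `|B|` is a constant times `ℓ ^ n`, the `p`-th root is a constant
times `A * ℓ ^ (n / p - θ)`, which is the asserted power of `|Q| = ℓ ^ n`. In dimension `0` the
seminorm vanishes.
-/


open MeasureTheory ENNReal Metric

noncomputable section

/-- The radial profile `k r = (min 2 r) ^ p * r ^ (-s)` which, with `s = n + p θ`, dominates the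
Besov integrand of an atom of unit size. -/
def besovKernel (p s r : ℝ) : ℝ := (min 2 r) ^ p * r ^ (-s)

lemma measurable_besovKernel (p s : ℝ) : Measurable (besovKernel p s) := by
  unfold besovKernel
  fun_prop

lemma besovKernel_nonneg {p s r : ℝ} (hr : 0 ≤ r) : 0 ≤ besovKernel p s r := by
  unfold besovKernel
  positivity

/-- Integrability of the radial kernel: `θ < 1` is used at the origin and `0 < θ` at infinity. -/
lemma integrable_besovKernel {n : ℕ} (hn : n ≠ 0) {p θ : ℝ} (hp : 1 ≤ p) (hθ0 : 0 < θ)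
    (hθ1 : θ < 1) :
    Integrable (fun v : EuclideanSpace ℝ (Fin n) => besovKernel p (n + p * θ) ‖v‖) := by
  have : Nonempty (Fin n) := ⟨⟨0, Nat.pos_of_ne_zero hn⟩⟩
  have hp0 : 0 < p := by linarith
  rw [integrable_fun_norm_addHaar volume (f := besovKernel p (n + p * θ))]
  simp only [finrank_euclideanSpace, Fintype.card_fin, smul_eq_mul]
  have hmeas : Measurable fun y : ℝ => y ^ (n - 1) * besovKernel p (n + p * θ) y :=
    (measurable_id.pow_const _).mul (measurable_besovKernel _ _)
  have hpow : ∀ y : ℝ, 0 < y → y ^ (n - 1) = y ^ ((n : ℝ) - 1) := by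
    intro y hy
    rw [← Real.rpow_natCast, Nat.cast_sub (Nat.one_le_iff_ne_zero.2 hn), Nat.cast_one]
  rw [← Set.Ioc_union_Ioi_eq_Ioi (zero_le_one (α := ℝ))]
  refine IntegrableOn.union ?_ ?_
  · have h1 : IntegrableOn (fun y : ℝ => y ^ (p - p * θ - 1)) (Set.Ioc 0 1) := by
      rw [← intervalIntegrable_iff_integrableOn_Ioc_of_le zero_le_one]
      exact intervalIntegral.intervalIntegrable_rpow' (by nlinarith)
    refine Integrable.mono' h1 hmeas.aestronglyMeasurable ?_
    filter_upwards [ae_restrict_mem measurableSet_Ioc] with y hy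
    have hy0 : 0 < y := hy.1
    rw [Real.norm_of_nonneg (mul_nonneg (by positivity) (besovKernel_nonneg hy0.le)), hpow y hy0]
    calc y ^ ((n : ℝ) - 1) * besovKernel p (n + p * θ) y
        ≤ y ^ ((n : ℝ) - 1) * (y ^ p * y ^ (-(n + p * θ))) := by
          unfold besovKernel
          gcongr
          exact min_le_right _ _
      _ = y ^ (p - p * θ - 1) := by
          rw [← Real.rpow_add hy0, ← Real.rpow_add hy0]
          ring_nf
  · have h1 : IntegrableOn (fun y : ℝ => 2 ^ p * y ^ (-1 - p * θ)) (Set.Ioi 1) :=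
      (integrableOn_Ioi_rpow_of_lt (by nlinarith) one_pos).const_mul _
    refine Integrable.mono' h1 hmeas.aestronglyMeasurable ?_
    filter_upwards [ae_restrict_mem measurableSet_Ioi] with y hy
    have hy0 : 0 < y := zero_lt_one.trans hy
    rw [Real.norm_of_nonneg (mul_nonneg (by positivity) (besovKernel_nonneg hy0.le)), hpow y hy0]
    calc y ^ ((n : ℝ) - 1) * besovKernel p (n + p * θ) y
        ≤ y ^ ((n : ℝ) - 1) * (2 ^ p * y ^ (-(n + p * θ))) := by
          unfold besovKernel
          gcongr
          exact min_le_left _ _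
      _ = 2 ^ p * y ^ (-1 - p * θ) := by
          rw [mul_left_comm, ← Real.rpow_add hy0]
          ring_nf

/-- The tripled cube lies in a ball of radius comparable to its side length. -/
lemma mem_closedBall_of_mem_cube {n : ℕ} {x z : EuclideanSpace ℝ (Fin n)} {ℓ : ℝ} (hℓ : 0 < ℓ)
    (h : ∀ i, |x i - z i| ≤ 3 * ℓ / 2) : x ∈ closedBall z (√n * (3 / 2) * ℓ) := by
  rw [mem_closedBall, EuclideanSpace.dist_eq]
  have h2 : ∑ i, dist (x i) (z i) ^ 2 ≤ n * (3 * ℓ / 2) ^ 2 := by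
    calc ∑ i, dist (x i) (z i) ^ 2 ≤ ∑ _i : Fin n, (3 * ℓ / 2) ^ 2 := by
          refine Finset.sum_le_sum fun i _ => ?_
          rw [Real.dist_eq]
          have := h i
          gcongr
      _ = _ := by simp
  calc √(∑ i, dist (x i) (z i) ^ 2) ≤ √(n * (3 * ℓ / 2) ^ 2) := Real.sqrt_le_sqrt h2
    _ = √n * (3 / 2) * ℓ := by
        rw [Real.sqrt_mul (Nat.cast_nonneg n), Real.sqrt_sq (by positivity)]
        ring

/-- Scaled pointwise bound for the Besov integrand of a bounded Lipschitz function. -/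
lemma atom_integrand_le {n : ℕ} {p s A ℓ : ℝ} (hp : 0 < p) (hA : 0 ≤ A) (hℓ : 0 < ℓ)
    {a : EuclideanSpace ℝ (Fin n) → ℂ} (hlip : ∀ x y, ‖a x - a y‖ ≤ A / ℓ * dist x y)
    (hbd : ∀ x, ‖a x‖ ≤ A) (x y : EuclideanSpace ℝ (Fin n)) :
    ENNReal.ofReal ‖a x - a y‖ ^ p / ENNReal.ofReal (dist x y) ^ s ≤
      ENNReal.ofReal (A ^ p * ℓ ^ (-s)) *
        ENNReal.ofReal (besovKernel p s ‖ℓ⁻¹ • (x - y)‖) := by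
  rcases eq_or_ne x y with rfl | hxy
  · simp [ENNReal.zero_rpow_of_pos hp]
  have hd : 0 < dist x y := dist_pos.2 hxy
  have hnorm : ‖ℓ⁻¹ • (x - y)‖ = dist x y / ℓ := by
    rw [norm_smul, norm_inv, Real.norm_of_nonneg hℓ.le, ← dist_eq_norm]
    field_simp
  rw [hnorm, ENNReal.ofReal_rpow_of_nonneg (norm_nonneg _) hp.le,
    ENNReal.ofReal_rpow_of_pos hd, ← ENNReal.ofReal_div_of_pos (by positivity),
    ← ENNReal.ofReal_mul (by positivity)]
  refine ENNReal.ofReal_le_ofReal ?_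
  have hmin : ‖a x - a y‖ ≤ A * min 2 (dist x y / ℓ) := by
    rw [mul_min_of_nonneg _ _ hA]
    refine le_min ?_ ?_
    · linarith [norm_sub_le (a x) (a y), hbd x, hbd y]
    · exact (hlip x y).trans_eq (by ring)
  calc ‖a x - a y‖ ^ p / dist x y ^ s ≤ (A * min 2 (dist x y / ℓ)) ^ p / dist x y ^ s := by
        gcongr
    _ = A ^ p * ℓ ^ (-s) * besovKernel p s (dist x y / ℓ) := by
        unfold besovKernel
        rw [Real.mul_rpow hA (by positivity), Real.div_rpow hd.le hℓ.le, Real.rpow_neg hℓ.le,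
          Real.rpow_neg hd.le]
        have := Real.rpow_pos_of_pos hℓ s
        field_simp

lemma lintegral_comp_inv_smul {n : ℕ} {ℓ : ℝ} (hℓ : 0 < ℓ)
    {K : EuclideanSpace ℝ (Fin n) → ℝ≥0∞} (hK : Measurable K) :
    ∫⁻ u, K (ℓ⁻¹ • u) = ENNReal.ofReal (ℓ ^ n) * ∫⁻ v, K v := by
  have h := Measure.map_addHaar_smul (volume : Measure (EuclideanSpace ℝ (Fin n)))
    (inv_ne_zero hℓ.ne')
  rw [← lintegral_map (f := K) (g := fun u => ℓ⁻¹ • u) hK (measurable_const_smul _), h,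
    lintegral_smul_measure, finrank_euclideanSpace, Fintype.card_fin, smul_eq_mul, inv_pow,
    inv_inv, abs_of_pos (by positivity)]

/-- Tonelli bound for an integrand dominated by a dilated even convolution kernel and vanishing
when both variables lie outside `B`. -/
lemma lintegral_lintegral_le {n : ℕ} {ℓ : ℝ} (hℓ : 0 < ℓ)
    {K : EuclideanSpace ℝ (Fin n) → ℝ≥0∞} (hK : Measurable K)
    {B : Set (EuclideanSpace ℝ (Fin n))} (hB : MeasurableSet B) (c : ℝ≥0∞)
    {F : EuclideanSpace ℝ (Fin n) → EuclideanSpace ℝ (Fin n) → ℝ≥0∞}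
    (hF : ∀ x y, F x y ≤ c * K (ℓ⁻¹ • (x - y))) (hF0 : ∀ x y, x ∉ B → y ∉ B → F x y = 0)
    (hsymm : ∀ v, K (-v) = K v) :
    ∫⁻ x, ∫⁻ y, F x y ≤
      2 * (c * (volume B * (ENNReal.ofReal (ℓ ^ n) * ∫⁻ v, K v))) := by
  set G : EuclideanSpace ℝ (Fin n) → EuclideanSpace ℝ (Fin n) → ℝ≥0∞ :=
    fun x y => B.indicator (fun _ => c * K (ℓ⁻¹ • (x - y))) x with hG
  have hGm : Measurable (Function.uncurry G) := by
    have : Function.uncurry G =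
        (B ×ˢ (Set.univ : Set (EuclideanSpace ℝ (Fin n)))).indicator
          (fun q => c * K (ℓ⁻¹ • (q.1 - q.2))) := by
      ext ⟨x, y⟩
      by_cases hx : x ∈ B <;> simp [hG, hx]
    rw [this]
    refine Measurable.indicator ?_ (hB.prod MeasurableSet.univ)
    exact (hK.comp (by fun_prop)).const_mul c
  have hle : ∀ x y, F x y ≤ G x y + G y x := by
    intro x y
    by_cases hx : x ∈ B
    · refine (hF x y).trans (le_trans ?_ le_self_add)
      simp [hG, hx]
    by_cases hy : y ∈ B
    · refine (hF x y).trans (le_trans ?_ le_add_self)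
      have : ℓ⁻¹ • (x - y) = -(ℓ⁻¹ • (y - x)) := by rw [← smul_neg, neg_sub]
      simp [hG, hy, this, hsymm]
    · simp [hF0 x y hx hy]
  have hI : ∫⁻ x, ∫⁻ y, G x y =
      c * (volume B * (ENNReal.ofReal (ℓ ^ n) * ∫⁻ v, K v)) := by
    have hin : ∀ x, ∫⁻ y, G x y =
        B.indicator (fun _ => c * (ENNReal.ofReal (ℓ ^ n) * ∫⁻ v, K v)) x := by
      intro x
      by_cases hx : x ∈ B
      · simp only [hG, Set.indicator_of_mem hx]
        have hm : Measurable fun y => K (ℓ⁻¹ • (x - y)) := hK.comp (by fun_prop)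
        rw [lintegral_const_mul c hm,
          lintegral_sub_left_eq_self (fun u => K (ℓ⁻¹ • u)) x, lintegral_comp_inv_smul hℓ hK]
      · simp [hG, hx]
    simp_rw [hin]
    rw [lintegral_indicator_const hB]
    ring
  calc ∫⁻ x, ∫⁻ y, F x y ≤ ∫⁻ x, ∫⁻ y, (G x y + G y x) :=
        lintegral_mono fun x => lintegral_mono fun y => hle x y
    _ = ∫⁻ x, ((∫⁻ y, G x y) + ∫⁻ y, G y x) := by
        refine lintegral_congr fun x => lintegral_add_left ?_ _
        exact hGm.comp measurable_prodMk_left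
    _ = (∫⁻ x, ∫⁻ y, G x y) + ∫⁻ x, ∫⁻ y, G y x :=
        lintegral_add_left hGm.lintegral_prod_right' _
    _ = (∫⁻ x, ∫⁻ y, G x y) + ∫⁻ x, ∫⁻ y, G x y := by
        congr 1
        exact lintegral_lintegral_swap (f := fun x y => G y x)
          (hGm.comp measurable_swap).aemeasurable
    _ = _ := by rw [hI, two_mul]

/-- The exponent arithmetic: with `A = |Q| ^ t`, the scale-dependent factors of the double integral
have `p`-th root `|Q| ^ (t - θ / n + 1 / p)`. -/
lemma scaling_rpow {n : ℕ} (hn : n ≠ 0) {p θ ℓ : ℝ} (hp : 0 < p) (hℓ : 0 < ℓ) (t : ℝ) :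
    ((((ℓ ^ n : ℝ) ^ t) ^ p * ℓ ^ (-(n + p * θ))) * (ℓ ^ n * ℓ ^ n)) ^ p⁻¹ =
      (ℓ ^ n : ℝ) ^ (t - θ / n + 1 / p) := by
  have hn' : (n : ℝ) ≠ 0 := Nat.cast_ne_zero.2 hn
  simp only [← Real.rpow_natCast ℓ n]
  simp only [← Real.rpow_mul hℓ.le, ← Real.rpow_add hℓ]
  congr 1
  field_simp
  ring

/-- Besov norms of atoms. Let `Q ⊂ ℝ^n` be the axis-parallel cube with
center `z` and side length `ℓ > 0` (so `|Q| = ℓ^n`), and `3Q` its concentric triple. If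
`a` is Lipschitz with a.e. gradient bound (equivalently, Lipschitz constant)
`|Q|^{θ₀/n − 1/p₀ − 1/n}`, is supported in `3Q`, and satisfies
`‖a‖_∞ ≤ |Q|^{θ₀/n − 1/p₀}`, then `‖a‖_{Ḃ^{p₁,p₁}_{θ₁}} ≤ C |Q|^{θ₀/n − 1/p₀ − θ₁/n + 1/p₁}`
where `C = C(n, p₁, θ₁)`. Here `1/p₀` is interpreted as `0` when `p₀ = ∞`. -/
theorem besov_atom_norm (n : ℕ) (p₁ θ₁ : ℝ) (hp₁ : 1 ≤ p₁) (hθ₁0 : 0 < θ₁) (hθ₁1 : θ₁ < 1) :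
    ∃ C : ℝ≥0∞, C < ⊤ ∧
      ∀ (θ₀ : ℝ) (p₀ : ℝ≥0∞), 0 < θ₀ → θ₀ < 1 → 0 < p₀ →
        ∀ (z : EuclideanSpace ℝ (Fin n)) (ℓ : ℝ), 0 < ℓ →
          ∀ a : EuclideanSpace ℝ (Fin n) → ℂ,
            LipschitzWith
              (Real.toNNReal ((ℓ ^ n : ℝ) ^ (θ₀ / n - p₀⁻¹.toReal - 1 / n))) a →
            (∀ x, ‖a x‖ ≤ (ℓ ^ n : ℝ) ^ (θ₀ / n - p₀⁻¹.toReal)) →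
            (∀ x : EuclideanSpace ℝ (Fin n),
              ¬(∀ i, |x i - z i| ≤ 3 * ℓ / 2) → a x = 0) →
            besovNorm n p₁ θ₁ a ≤
              C * ENNReal.ofReal ((ℓ ^ n : ℝ) ^ (θ₀ / n - p₀⁻¹.toReal - θ₁ / n + 1 / p₁)) := by
  have hp0 : 0 < p₁ := by linarith
  rcases eq_or_ne n 0 with rfl | hn
  · refine ⟨0, by simp, ?_⟩
    intro θ₀ p₀ _ _ _ z ℓ _ a _ _ _
    have h : ∀ x y : EuclideanSpace ℝ (Fin 0),
        ENNReal.ofReal ‖a x - a y‖ ^ p₁ /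
          ENNReal.ofReal (dist x y) ^ (((0 : ℕ) : ℝ) + p₁ * θ₁) = 0 := by
      intro x y
      rw [Subsingleton.elim x y]
      simp [ENNReal.zero_rpow_of_pos hp0]
    unfold besovNorm
    simp_rw [h]
    simp [ENNReal.zero_rpow_of_pos (inv_pos.2 hp0)]
  set s : ℝ := (n : ℝ) + p₁ * θ₁ with hs
  set K : EuclideanSpace ℝ (Fin n) → ℝ≥0∞ :=
    fun v => ENNReal.ofReal (besovKernel p₁ s ‖v‖) with hKdef
  have hK : Measurable K := ((measurable_besovKernel p₁ s).comp measurable_norm).ennreal_ofReal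
  have hKfin : ∫⁻ v, K v < ⊤ := (integrable_besovKernel hn hp₁ hθ₁0 hθ₁1).lintegral_lt_top
  set r : ℝ := √n * (3 / 2) with hr
  have hr0 : 0 ≤ r := by positivity
  set M : ℝ≥0∞ := 2 * (ENNReal.ofReal (r ^ n) *
    volume (ball (0 : EuclideanSpace ℝ (Fin n)) 1)) * ∫⁻ v, K v with hM
  have hMfin : M < ⊤ :=
    ENNReal.mul_lt_top (ENNReal.mul_lt_top (by simp)
      (ENNReal.mul_lt_top ENNReal.ofReal_lt_top measure_ball_lt_top)) hKfin
  refine ⟨M ^ p₁⁻¹, ENNReal.rpow_lt_top_of_nonneg (by positivity) hMfin.ne, ?_⟩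
  intro θ₀ p₀ _ _ _ z ℓ hℓ a hlip hbd hsupp
  set t : ℝ := θ₀ / n - p₀⁻¹.toReal with ht
  set A : ℝ := (ℓ ^ n : ℝ) ^ t with hA
  have hA0 : 0 < A := by positivity
  have hL : (ℓ ^ n : ℝ) ^ (t - 1 / n) = A / ℓ := by
    rw [Real.rpow_sub (by positivity), one_div, Real.pow_rpow_inv_natCast hℓ.le hn]
  have hlip' : ∀ x y, ‖a x - a y‖ ≤ A / ℓ * dist x y := by
    intro x y
    have := hlip.dist_le_mul x y
    rwa [hL, Real.coe_toNNReal _ (by positivity), dist_eq_norm] at this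
  have hzero : ∀ x, x ∉ closedBall z (r * ℓ) → a x = 0 := fun x hx =>
    hsupp x fun h => hx (mem_closedBall_of_mem_cube hℓ h)
  have hmain := lintegral_lintegral_le hℓ hK
    (isClosed_closedBall (x := z) (ε := r * ℓ)).measurableSet
    (ENNReal.ofReal (A ^ p₁ * ℓ ^ (-s)))
    (F := fun x y => ENNReal.ofReal ‖a x - a y‖ ^ p₁ / ENNReal.ofReal (dist x y) ^ s)
    (atom_integrand_le hp0 hA0.le hℓ hlip' hbd)
    (fun x y hx hy => by simp [hzero x hx, hzero y hy, ENNReal.zero_rpow_of_pos hp0])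
    (fun v => by simp [hKdef])
  have hvol : volume (closedBall z (r * ℓ)) = ENNReal.ofReal (ℓ ^ n) *
      (ENNReal.ofReal (r ^ n) * volume (ball (0 : EuclideanSpace ℝ (Fin n)) 1)) := by
    rw [Measure.addHaar_closedBall _ _ (by positivity), finrank_euclideanSpace, Fintype.card_fin,
      mul_pow, ENNReal.ofReal_mul (by positivity)]
    ring
  unfold besovNorm
  calc _ ≤ (M * ENNReal.ofReal (A ^ p₁ * ℓ ^ (-s) * (ℓ ^ n * ℓ ^ n))) ^ p₁⁻¹ := by
        refine ENNReal.rpow_le_rpow (hmain.trans_eq ?_) (by positivity)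
        rw [hvol, hM, ENNReal.ofReal_mul (p := A ^ p₁ * ℓ ^ (-s)) (by positivity),
          ENNReal.ofReal_mul (p := ℓ ^ n) (by positivity)]
        ring
    _ = _ := by
        rw [ENNReal.mul_rpow_of_nonneg _ _ (by positivity),
          ENNReal.ofReal_rpow_of_pos (by positivity), hA, hs, scaling_rpow hn hp0 hℓ t]

end
end
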